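/- Let k ≥ 1 and n ≥ k + 2, and let e_n denote the last standard basis vector of ℝ^n. Let s_1, …, s_l be (k−1)-simplices contained in the hyperplane {x ∈ ℝ^n : ⟨x, e_n⟩ = 0}, and let F_i = f_i e_n with f_i ∈ ℝ be forces perpendicular to this hyperplane. If the finite system of forces F = Σ_{i=1}^{l} F_i μ_{s_i} is in equilibrium, then F = B + F^h, where B is a finite sum of k-beams with symmetric coefficient matrices structural for their simplices, and F^h = Σ_{i=1}^{l} F_i^h μ_{s_i} is a finite system of forces in equilibrium whose simplices s_i and whose force vectors F_i^h all lie in the hyperplane {x : ⟨x, e_n⟩ = 0}. -/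

import Mathlib

open MeasureTheory Matrix
open scoped RealInnerProductSpace

noncomputable section

abbrev Euc (n : ℕ) : Type := EuclideanSpace ℝ (Fin n)

/-- The action of an `n × n` real matrix on a vector of `ℝⁿ`. -/
def matVec {n : ℕ} (A : Matrix (Fin n) (Fin n) ℝ) (v : Euc n) : Euc n :=
  Matrix.toEuclideanLin A v

/-- `wedge v w = v wᵀ − w vᵀ`. -/
def wedge {n : ℕ} (v w : Euc n) : Matrix (Fin n) (Fin n) ℝ :=
  Matrix.of fun p q => v p * w q - w p * v q

/-- `rankOne v = v vᵀ`. -/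
def rankOne {n : ℕ} (v : Euc n) : Matrix (Fin n) (Fin n) ℝ :=
  Matrix.of fun p q => v p * v q

/-- The (closed) simplex spanned by a family of points: the convex hull of its range. -/
def simplexSet {n : ℕ} {ι : Type*} (b : ι → Euc n) : Set (Euc n) :=
  convexHull ℝ (Set.range b)

/-- The barycenter of a finite family of points. -/
def bary {n : ℕ} {ι : Type*} [Fintype ι] (b : ι → Euc n) : Euc n :=
  (Fintype.card ι : ℝ)⁻¹ • ∑ i, b i

/-- The vertices of the face of the simplex `b` opposite to the vertex `i`. -/
def face {n K : ℕ} (b : Fin K → Euc n) (i : Fin K) : {j : Fin K // j ≠ i} → Euc n :=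
  fun j => b j.1

/-- The vector measure `Σᵢ Fᵢ μ_{sᵢ}` of a finite system of forces, as an
`ℝⁿ`-valued set function; here `d` is the Hausdorff dimension of the simplices. -/
def sys {n l : ℕ} {ι : Type*} (d : ℝ) (s : Fin l → ι → Euc n) (F : Fin l → Euc n) :
    Set (Euc n) → Euc n :=
  fun S => ∑ i, (μH[d] (S ∩ simplexSet (s i))).toReal • F i

/-- A finite system of forces is in equilibrium: zero net force and zero net torque. -/
def equil {n l : ℕ} {ι : Type*} [Fintype ι] (d : ℝ) (s : Fin l → ι → Euc n)
    (F : Fin l → Euc n) : Prop :=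
  (∑ i, (μH[d] (simplexSet (s i))).toReal • F i = 0) ∧
  (∑ i, (μH[d] (simplexSet (s i))).toReal • wedge (bary (s i)) (F i) = 0)

/-- `v` is the outward unit conormal of the face of `b` opposite vertex `i`. -/
def IsConormal {n K : ℕ} (b : Fin K → Euc n) (i : Fin K) (v : Euc n) : Prop :=
  v ∈ vectorSpan ℝ (Set.range b) ∧ ‖v‖ = 1 ∧
    (∀ w ∈ vectorSpan ℝ (Set.range (face b i)), ⟪v, w⟫ = 0) ∧
    ⟪v, b i - bary (face b i)⟫ < 0

open scoped Classical in
/-- The outward unit conormal of the face of `b` opposite vertex `i`. -/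
def conormal {n K : ℕ} (b : Fin K → Euc n) (i : Fin K) : Euc n :=
  if h : ∃ v, IsConormal b i v then h.choose else 0

/-- A matrix is structural for a simplex if its range is contained in the
direction space of the simplex. -/
def Structural {n : ℕ} {ι : Type*} (A : Matrix (Fin n) (Fin n) ℝ) (b : ι → Euc n) : Prop :=
  ∀ v, matVec A v ∈ vectorSpan ℝ (Set.range b)

/-- The beam `A ⊗ Beam(τ)` of a simplex `τ` with `K` vertices (so of dimension `K − 1`,
with faces of dimension `K − 2`), as an `ℝⁿ`-valued set function. -/
def beam {n K : ℕ} (A : Matrix (Fin n) (Fin n) ℝ) (b : Fin K → Euc n) :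
    Set (Euc n) → Euc n :=
  fun S => ∑ i, (μH[(K : ℝ) - 2] (S ∩ simplexSet (face b i))).toReal • matVec A (conormal b i)

/-- `G` is a finite sum of beams over simplices with `K` vertices, with symmetric
coefficient matrices that are structural for their simplices. -/
def IsBeamSum {n : ℕ} (K : ℕ) (G : Set (Euc n) → Euc n) : Prop :=
  ∃ (m : ℕ) (τ : Fin m → Fin K → Euc n) (A : Fin m → Matrix (Fin n) (Fin n) ℝ),
    (∀ j, AffineIndependent ℝ (τ j)) ∧ (∀ j, (A j).IsSymm) ∧
    (∀ j, Structural (A j) (τ j)) ∧ (G = fun S => ∑ j, beam (A j) (τ j) S)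


lemma dense_compl_of_ne_top {n : ℕ} (A : AffineSubspace ℝ (Euc n)) (hA : A ≠ ⊤) :
    Dense ((A : Set (Euc n))ᶜ) := by
  rw [← interior_eq_empty_iff_dense_compl]
  by_contra h
  have h1 : (interior (A : Set (Euc n))).Nonempty := Set.nonempty_iff_ne_empty.2 h
  have h2 := isOpen_interior.affineSpan_eq_top h1
  apply hA
  rw [eq_top_iff, ← h2, affineSpan_le]
  exact interior_subset

lemma open_compl_aff {n : ℕ} (A : AffineSubspace ℝ (Euc n)) :
    IsOpen ((A : Set (Euc n))ᶜ) :=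
  (AffineSubspace.closed_of_finiteDimensional A).isOpen_compl

/-- the affine subspace spanned by A and p -/
def jn {n : ℕ} (A : Set (Euc n)) (p : Euc n) : AffineSubspace ℝ (Euc n) :=
  affineSpan ℝ (insert p A)

lemma linmap_zero_of_dense {n : ℕ} {F : Type*} [NormedAddCommGroup F] [NormedSpace ℝ F]
    (N : Euc n →ₗ[ℝ] F) (D : Set (Euc n)) (hD : Dense D)
    (h : ∀ x ∈ D, ∀ y ∈ D, N (x - y) = 0) : N = 0 := by
  obtain ⟨y, hy⟩ := hD.nonempty
  have hc : Continuous N := N.continuous_of_finiteDimensional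
  have : ∀ x, N (x - y) = 0 := by
    have hcl : IsClosed {x | N (x - y) = 0} :=
      isClosed_eq (hc.comp (continuous_id.sub continuous_const)) continuous_const
    intro x
    have : closure D ⊆ {x | N (x - y) = 0} := hcl.closure_subset_iff.2 (fun x hx => h x hx y hy)
    exact this (hD x)
  ext1 x
  simpa using this (x + y)

lemma skew_swap {n : ℕ} (M : Euc n →ₗ[ℝ] Euc n) (h : ∀ x, ⟪M x, x⟫ = 0) (x y : Euc n) :
    ⟪M x, y⟫ = - ⟪M y, x⟫ := by
  have := h (x + y)
  simp only [map_add, inner_add_left, inner_add_right, h] at this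
  linarith

lemma rigid_one {n : ℕ} (A : Set (Euc n)) (hA : ∀ p, jn A p ≠ ⊤) (u : Euc n → Euc n)
    (hu : ∀ p, p ∉ affineSpan ℝ A → ∀ q, q ∉ jn A p → ⟪u p - u q, p - q⟫ = 0) :
    ∃ (M : Euc n →ₗ[ℝ] Euc n) (t : Euc n), (∀ x, ⟪M x, x⟫ = 0) ∧
      ∀ p, p ∉ affineSpan ℝ A → u p = M p + t := by
  have hA0 : affineSpan ℝ A ≠ ⊤ := by
    intro h
    apply hA 0
    rw [eq_top_iff, ← h]
    exact affineSpan_mono ℝ (Set.subset_insert _ _)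
  have hAd := dense_compl_of_ne_top _ hA0
  obtain ⟨q0, hq0⟩ := hAd.nonempty
  obtain ⟨ε, hε, hball⟩ := Metric.isOpen_iff.1 (open_compl_aff (affineSpan ℝ A)) q0 hq0
  set e : Fin n → Euc n := fun i => EuclideanSpace.single i (1:ℝ) with he
  set q : Fin n → Euc n := fun i => q0 + (ε/2) • e i with hq
  have hqi : ∀ i, q i ∉ affineSpan ℝ A := by
    intro i
    apply hball
    simp [hq, he, norm_smul, abs_of_pos hε]
    exact hε
  set U : Set (Euc n) := ((jn A q0 : Set (Euc n))ᶜ) ∩ ⋂ i, ((jn A (q i) : Set (Euc n))ᶜ) with hU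
  have hUo : IsOpen U := (open_compl_aff _).inter (isOpen_iInter_of_finite fun i => open_compl_aff _)
  have hUd : Dense U := by
    apply (dense_compl_of_ne_top _ (hA _)).inter_of_isOpen_left _ (open_compl_aff _)
    exact dense_iInter_of_isOpen (fun i => open_compl_aff _)
      (fun i => dense_compl_of_ne_top _ (hA _))
  have hsub : ∀ p, (affineSpan ℝ A : Set (Euc n)) ⊆ jn A p := fun p =>
    affineSpan_mono ℝ (Set.subset_insert _ _)
  have hUA : ∀ p ∈ U, p ∉ affineSpan ℝ A := fun p hp h => hp.1 (hsub _ h)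
  let L : Euc n →ₗ[ℝ] Euc n :=
    ∑ i, (-(2/ε)) • ((innerSL ℝ (u (q i) - u q0)).toLinearMap.smulRight (e i))
  let t : Euc n := ∑ i, ((2/ε) * (⟪u (q i), q i⟫ - ⟪u q0, q0⟫)) • e i
  have hdec : ∀ x : Euc n, x = ∑ i, ⟪x, e i⟫ • e i := by
    intro x
    have := (EuclideanSpace.basisFun (Fin n) ℝ).sum_repr x
    conv_lhs => rw [← this]
    apply Finset.sum_congr rfl
    intro i _
    simp [he, EuclideanSpace.inner_single_right]
  have hUf : ∀ p ∈ U, u p = L p + t := by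
    intro p hp
    rw [hdec (u p)]
    simp only [L, t, LinearMap.sum_apply, LinearMap.smul_apply, LinearMap.smulRight_apply]
    rw [← Finset.sum_add_distrib]
    apply Finset.sum_congr rfl
    intro i _
    rw [smul_smul, ← add_smul]
    congr 1
    have h1 := hu q0 hq0 p hp.1
    have h2 := hu (q i) (hqi i) p (Set.mem_iInter.1 hp.2 i)
    have h3 : ⟪u p, e i⟫ = (2/ε) * (⟪u p, q i⟫ - ⟪u p, q0⟫) := by
      simp only [hq, inner_add_right, inner_smul_right]
      field_simp
      ring
    rw [h3]
    simp only [inner_sub_left, inner_sub_right, ContinuousLinearMap.coe_coe, innerSL_apply_apply] at h1 h2 ⊢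
    linear_combination (2/ε) * h1 - (2/ε) * h2
  have hLc : Continuous L := L.continuous_of_finiteDimensional
  have hV : ∀ p, Dense (U ∩ (jn A p : Set (Euc n))ᶜ) := fun p =>
    hUd.inter_of_isOpen_left (dense_compl_of_ne_top _ (hA _)) hUo
  have key : ∀ p, p ∉ affineSpan ℝ A → ∀ x, ⟪u p - (L (p - x) + t), x⟫ = 0 := by
    intro p hp x
    have hcl : IsClosed {y | ⟪u p - (L y + t), p - y⟫ = 0} :=
      isClosed_eq (by fun_prop) continuous_const
    have : closure (U ∩ (jn A p : Set (Euc n))ᶜ) ⊆ {y | ⟪u p - (L y + t), p - y⟫ = 0} := by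
      apply hcl.closure_subset_iff.2
      intro y hy
      have := hu p hp y hy.2
      rwa [hUf y hy.1] at this
    have := this (hV p (p - x))
    simpa using this
  have hskew : ∀ x, ⟪L x, x⟫ = 0 := by
    obtain ⟨p, hp⟩ := hUd.nonempty
    intro x
    have := key p (hUA p hp) x
    rw [hUf p hp, map_sub] at this
    have h2 : L p + t - (L p - L x + t) = L x := by abel
    rwa [h2] at this
  refine ⟨L, t, hskew, fun p hp => ?_⟩
  have : ∀ x, ⟪u p - (L p + t), x⟫ = 0 := by
    intro x
    have h1 := key p hp x
    rw [map_sub] at h1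
    have h2 : u p - (L p - L x + t) = (u p - (L p + t)) + L x := by abel
    rw [h2, inner_add_left, hskew, add_zero] at h1
    exact h1
  have := this (u p - (L p + t))
  rw [inner_self_eq_zero, sub_eq_zero] at this
  exact this

lemma rigid_two {n : ℕ} (A : Set (Euc n)) (hA : ∀ p, jn A p ≠ ⊤)
    (M : Euc n → Euc n →ₗ[ℝ] Euc n) (t : Euc n → Euc n)
    (hM : ∀ p, p ∉ affineSpan ℝ A → ∀ x, ⟪M p x, x⟫ = 0)
    (hs : ∀ p, p ∉ affineSpan ℝ A → ∀ q, q ∉ jn A p → M p q + t p = M q p + t q)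
    (p p' : Euc n) (hp : p ∉ affineSpan ℝ A) (hp' : p' ∉ affineSpan ℝ A) : M p = M p' := by
  have hsub : ∀ p, (affineSpan ℝ A : Set (Euc n)) ⊆ jn A p := fun p =>
    affineSpan_mono ℝ (Set.subset_insert _ _)
  have hD : ∀ p p', Dense ((jn A p : Set (Euc n))ᶜ ∩ (jn A p' : Set (Euc n))ᶜ) := fun p p' =>
    (dense_compl_of_ne_top _ (hA _)).inter_of_isOpen_left (dense_compl_of_ne_top _ (hA _))
      (open_compl_aff _)
  have hO : ∀ p p', IsOpen ((jn A p : Set (Euc n))ᶜ ∩ (jn A p' : Set (Euc n))ᶜ) := fun p p' =>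
    (open_compl_aff _).inter (open_compl_aff _)
  have four : ∀ p p' q q', p ∉ affineSpan ℝ A → p' ∉ affineSpan ℝ A → q ∉ jn A p → q ∉ jn A p' →
      q' ∉ jn A p → q' ∉ jn A p' → (M p - M p') (q - q') = (M q - M q') (p - p') := by
    intro p p' q q' h1 h2 h3 h4 h5 h6
    have a1 := eq_sub_of_add_eq (hs p h1 q h3)
    have a2 := eq_sub_of_add_eq (hs p h1 q' h5)
    have a3 := eq_sub_of_add_eq (hs p' h2 q h4)
    have a4 := eq_sub_of_add_eq (hs p' h2 q' h6)
    simp only [LinearMap.sub_apply, map_sub]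
    rw [a1, a2, a3, a4]
    abel
  have sk : ∀ p p', p ∉ affineSpan ℝ A → p' ∉ affineSpan ℝ A → ∀ x y,
      ⟪(M p - M p') x, y⟫ = - ⟪(M p - M p') y, x⟫ := by
    intro p p' h1 h2
    apply skew_swap
    intro x
    simp [inner_sub_left, hM p h1, hM p' h2]
  rw [← sub_eq_zero]
  apply linmap_zero_of_dense _ _ (hD p p')
  intro q hq q' hq'
  have hqA : q ∉ affineSpan ℝ A := fun h => hq.1 (hsub _ h)
  have hqA' : q' ∉ affineSpan ℝ A := fun h => hq'.1 (hsub _ h)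
  have h0 : (innerSL ℝ ((M p - M p') (q - q'))).toLinearMap = 0 := by
    apply linmap_zero_of_dense _ _ ((hD p p').inter_of_isOpen_left (hD q q') (hO p p'))
    intro x hx x' hx'
    have hxA : x ∉ affineSpan ℝ A := fun h => hx.1.1 (hsub _ h)
    have hxA' : x' ∉ affineSpan ℝ A := fun h => hx'.1.1 (hsub _ h)
    have e1 := four p p' q q' hp hp' hq.1 hq.2 hq'.1 hq'.2
    have e2 := four p p' x x' hp hp' hx.1.1 hx.1.2 hx'.1.1 hx'.1.2
    have e3 := four q q' x x' hqA hqA' hx.2.1 hx.2.2 hx'.2.1 hx'.2.2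
    have s1 := sk q q' hqA hqA' (p - p') (x - x')
    have s2 := sk x x' hxA hxA' (q - q') (p - p')
    have s3 := sk p p' hp hp' (x - x') (q - q')
    simp only [ContinuousLinearMap.coe_coe, innerSL_apply_apply]
    rw [← e1, e3] at s1
    rw [← e2] at s2
    linarith
  have := congrArg (fun f => f ((M p - M p') (q - q'))) h0
  exact inner_self_eq_zero.1 this

/-- affine independence of a finite set of points -/
def ind {n : ℕ} (S : Finset (Euc n)) : Prop := AffineIndependent ℝ ((↑) : S → Euc n)

lemma ind_mono {n : ℕ} {S T : Finset (Euc n)} (hT : ind T) (h : S ⊆ T) : ind S :=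
  AffineIndependent.mono (s := (S : Set (Euc n))) (t := (T : Set (Euc n))) hT (by exact_mod_cast h)

open scoped Classical in
lemma ind_insert {n : ℕ} {S : Finset (Euc n)} (hS : ind S) {p : Euc n}
    (hp : p ∉ affineSpan ℝ (S : Set (Euc n))) : ind (insert p S) := by
  have hpS : p ∉ S := fun h => hp (mem_affineSpan ℝ (by exact_mod_cast h))
  unfold ind
  apply AffineIndependent.affineIndependent_of_notMem_span (i := ⟨p, Finset.mem_insert_self _ _⟩)
  · have : ∀ x : {y : {z // z ∈ insert p S} // y ≠ ⟨p, Finset.mem_insert_self _ _⟩}, (x : Euc n) ∈ S := by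
      intro x
      rcases Finset.mem_insert.1 x.1.2 with h | h
      · exact absurd (Subtype.ext h) x.2
      · exact h
    have hS' : AffineIndependent ℝ ((↑) : S → Euc n) := hS
    let emb : {y : {z // z ∈ insert p S} // y ≠ ⟨p, Finset.mem_insert_self _ _⟩} ↪ S :=
      ⟨fun x => ⟨(x : Euc n), this x⟩, fun x y h => by
        apply Subtype.ext; apply Subtype.ext; exact congrArg (fun z : S => (z : Euc n)) h⟩
    exact hS'.comp_embedding emb
  · intro h
    apply hp
    refine affineSpan_mono ℝ ?_ h
    rintro _ ⟨x, hx, rfl⟩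
    rcases Finset.mem_insert.1 x.2 with h | h
    · exact absurd (Subtype.ext h) hx
    · exact h

open scoped Classical in
lemma ind_notMem {n : ℕ} {S : Finset (Euc n)} {p : Euc n} (hp : p ∉ S)
    (h : ind (insert p S)) : p ∉ affineSpan ℝ (S : Set (Euc n)) := by
  have := (AffineIndependent.notMem_affineSpan_sdiff h ⟨p, Finset.mem_insert_self _ _⟩ Set.univ)
  intro h'
  apply this
  refine affineSpan_mono ℝ ?_ h'
  intro x hx
  refine ⟨⟨x, Finset.mem_insert_of_mem hx⟩, ⟨trivial, ?_⟩, rfl⟩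
  intro h2
  have : x = p := congrArg Subtype.val h2
  exact hp (this ▸ hx)

open scoped Classical in
lemma exchange_const {n m : ℕ} {X : Type*} (f : Finset (Euc n) → X)
    (hf : ∀ r : Finset (Euc n), r.card + 1 = m → ind r → ∀ p q,
      p ∉ affineSpan ℝ (r : Set (Euc n)) → q ∉ affineSpan ℝ (r : Set (Euc n)) →
      f (insert p r) = f (insert q r)) :
    ∀ S T : Finset (Euc n), S.card = m → T.card = m → ind S → ind T → f S = f T := by
  suffices ∀ c, ∀ S T : Finset (Euc n), (S \ T).card = c → S.card = m → T.card = m → ind S →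
      ind T → f S = f T from fun S T => this _ S T rfl
  intro c
  induction c with
  | zero =>
    intro S T h hS hT _ _
    have : S ⊆ T := by simpa using h
    rw [Finset.eq_of_subset_of_card_le this (by omega)]
  | succ c ih =>
    intro S T h hS hT iS iT
    obtain ⟨x, hx⟩ : (S \ T).Nonempty := by rw [← Finset.card_pos]; omega
    have hxS := (Finset.mem_sdiff.1 hx).1
    have hxT := (Finset.mem_sdiff.1 hx).2
    have hr : (S.erase x).card + 1 = m := by rw [Finset.card_erase_add_one hxS, hS]
    have ir : ind (S.erase x) := ind_mono iS (Finset.erase_subset _ _)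
    obtain ⟨y, hyT, hy⟩ : ∃ y ∈ T, y ∉ affineSpan ℝ ((S.erase x : Finset (Euc n)) : Set (Euc n)) := by
      by_contra hcon
      push Not at hcon
      have := AffineIndependent.card_le_card_of_subset_affineSpan (t := S.erase x) iT
        (fun y hy => hcon y hy)
      omega
    have hyS : y ∉ S.erase x := fun h => hy (mem_affineSpan ℝ (by exact_mod_cast h))
    have hxn : x ∉ affineSpan ℝ ((S.erase x : Finset (Euc n)) : Set (Euc n)) :=
      ind_notMem (Finset.notMem_erase _ _) (by rwa [Finset.insert_erase hxS])
    have e := hf (S.erase x) hr ir x y hxn hy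
    rw [Finset.insert_erase hxS] at e
    rw [e]
    apply ih _ T _ (by rw [Finset.card_insert_of_notMem hyS, hr]) hT (ind_insert ir hy) iT
    have : insert y (S.erase x) \ T = (S \ T).erase x := by
      ext z
      simp only [Finset.mem_sdiff, Finset.mem_insert, Finset.mem_erase]
      constructor
      · rintro ⟨rfl | h, h2⟩
        · exact absurd hyT h2
        · exact ⟨h.1, h.2, h2⟩
      · rintro ⟨h1, h2, h3⟩
        exact ⟨Or.inr ⟨h1, h2⟩, h3⟩
    rw [this, Finset.card_erase_of_mem hx, h]
    try rfl

lemma span_ne_top {n : ℕ} (S : Finset (Euc n)) (h : S.card ≤ n) :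
    affineSpan ℝ (S : Set (Euc n)) ≠ ⊤ := by
  intro ht
  rcases S.eq_empty_or_nonempty with rfl | hne
  · rw [Finset.coe_empty, AffineSubspace.span_empty] at ht
    have : (0 : Euc n) ∈ (⊤ : AffineSubspace ℝ (Euc n)) := trivial
    rw [← ht] at this
    exact this
  have h1 : vectorSpan ℝ (S : Set (Euc n)) = ⊤ := by
    rw [← direction_affineSpan, ht, AffineSubspace.direction_top]
  have h2 := finrank_vectorSpan_image_finset_le ℝ (id : Euc n → Euc n) S (n := S.card - 1)
    (by have := hne.card_pos; omega)
  have := hne.card_pos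
  rw [Finset.coe_image, Set.image_id, h1, finrank_top, finrank_euclideanSpace_fin] at h2
  omega

open scoped Classical in
lemma rigidity {n k : ℕ} (hn : k + 2 ≤ n) (Φ : Finset (Euc n) → Euc n)
    (h : ∀ r : Finset (Euc n), r.card = k → ind r → ∀ p, p ∉ affineSpan ℝ (r : Set (Euc n)) →
      ∀ q, q ∉ affineSpan ℝ (insert p (r : Set (Euc n))) →
      ⟪Φ (insert p r) - Φ (insert q r), p - q⟫ = 0) :
    ∃ (M : Euc n →ₗ[ℝ] Euc n) (t : Euc n), 
      ∀ S : Finset (Euc n), S.card = k + 1 → ind S → Φ S = M (∑ x ∈ S, x) + t := by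
  by_cases hex : ∃ S : Finset (Euc n), S.card = k + 1 ∧ ind S
  swap
  · push Not at hex
    exact ⟨0, 0, fun S h1 h2 => absurd h2 (hex S h1)⟩
  obtain ⟨S0, hS0, iS0⟩ := hex
  have htop : ∀ r : Finset (Euc n), r.card ≤ k → ∀ p, jn (r : Set (Euc n)) p ≠ ⊤ := by
    intro r hr p
    have := span_ne_top (insert p r) ((Finset.card_insert_le _ _).trans (by omega))
    rwa [Finset.coe_insert] at this
  have h1 : ∀ r : Finset (Euc n), ∃ (M : Euc n →ₗ[ℝ] Euc n) (t : Euc n), r.card = k → ind r → 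
      (∀ x, ⟪M x, x⟫ = 0) ∧
      ∀ p, p ∉ affineSpan ℝ (r : Set (Euc n)) → Φ (insert p r) = M p + t := by
    intro r
    by_cases hr : r.card = k ∧ ind r
    · obtain ⟨M, t, hM⟩ := rigid_one (r : Set (Euc n)) (htop r hr.1.le) (fun p => Φ (insert p r))
        (h r hr.1 hr.2)
      exact ⟨M, t, fun _ _ => hM⟩
    · exact ⟨0, 0, fun h1 h2 => absurd ⟨h1, h2⟩ hr⟩
  choose M t hM using h1
  have hconst : ∀ S T : Finset (Euc n), S.card = k → T.card = k → ind S → ind T → M S = M T := by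
    apply exchange_const
    intro r hr ir p q hp hq
    have hcard : ∀ p, p ∉ affineSpan ℝ (r : Set (Euc n)) → (insert p r).card = k := by
      intro p hp
      rw [Finset.card_insert_of_notMem (fun h => hp (mem_affineSpan ℝ (by exact_mod_cast h))), hr]
    apply rigid_two (r : Set (Euc n)) (htop r (by omega)) (fun p => M (insert p r))
      (fun p => t (insert p r)) _ _ p q hp hq
    · intro p hp
      exact (hM _ (hcard p hp) (ind_insert ir hp)).1
    · intro p hp q hq
      have hqA : q ∉ affineSpan ℝ (r : Set (Euc n)) := fun h =>
        hq (affineSpan_mono ℝ (Set.subset_insert _ _) h)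
      have hq' : q ∉ affineSpan ℝ ((insert p r : Finset (Euc n)) : Set (Euc n)) := by
        rw [Finset.coe_insert]; exact hq
      have hqi : q ∉ insert p r := fun h => hq' (mem_affineSpan ℝ (by exact_mod_cast h))
      have i2 : ind (insert q (insert p r)) := ind_insert (ind_insert ir hp) hq'
      have hpr : p ∉ r := fun h => hp (mem_affineSpan ℝ (by exact_mod_cast h))
      have hp' : p ∉ affineSpan ℝ ((insert q r : Finset (Euc n)) : Set (Euc n)) := by
        apply ind_notMem
        · simp only [Finset.mem_insert, not_or] at hqi ⊢
          exact ⟨fun h => hqi.1 h.symm, hpr⟩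
        · rwa [Finset.insert_comm]
      have e1 := (hM _ (hcard p hp) (ind_insert ir hp)).2 q hq'
      have e2 := (hM _ (hcard q hqA) (ind_insert ir hqA)).2 p hp'
      show M (insert p r) q + t (insert p r) = M (insert q r) p + t (insert q r)
      rw [← e1, ← e2, Finset.insert_comm]
  obtain ⟨x0, hx0⟩ : S0.Nonempty := by rw [← Finset.card_pos]; omega
  set N := M (S0.erase x0) with hN
  have hc0 : (S0.erase x0).card = k := by rw [Finset.card_erase_of_mem hx0, hS0]; rfl
  have hMN : ∀ r : Finset (Euc n), r.card = k → ind r → M r = N := fun r hr ir =>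
    hconst r _ hr hc0 ir (ind_mono iS0 (Finset.erase_subset _ _))
  have hfin := exchange_const (m := k + 1) (fun S => Φ S - N (∑ x ∈ S, x)) (by
    intro r hr ir p q hp hq
    have hr' : r.card = k := by omega
    have hpr : p ∉ r := fun h => hp (mem_affineSpan ℝ (by exact_mod_cast h))
    have hqr : q ∉ r := fun h => hq (mem_affineSpan ℝ (by exact_mod_cast h))
    rw [(hM r hr' ir).2 p hp, (hM r hr' ir).2 q hq, Finset.sum_insert hpr, Finset.sum_insert hqr,
      hMN r hr' ir]
    simp only [map_add]
    abel)
  refine ⟨N, Φ S0 - N (∑ x ∈ S0, x), fun S hS iS => ?_⟩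
  rw [← hfin S S0 hS hS0 iS iS0]
  simp

/-- the affine isometric parametrization of `W + x0` -/
def par {n : ℕ} (W : Submodule ℝ (Euc n)) (x0 : Euc n) : W →ᵃ[ℝ] Euc n :=
  W.subtype.toAffineMap + AffineMap.const ℝ W x0

lemma par_apply {n : ℕ} (W : Submodule ℝ (Euc n)) (x0 : Euc n) (w : W) :
    par W x0 w = (w : Euc n) + x0 := rfl

lemma par_isom {n : ℕ} (W : Submodule ℝ (Euc n)) (x0 : Euc n) : Isometry (par W x0) := by
  apply Isometry.of_dist_eq
  intro x y
  simp [par_apply]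
  rfl

lemma par_image_preimage {n : ℕ} (W : Submodule ℝ (Euc n)) (x0 : Euc n) (S : Set (Euc n))
    (h : ∀ x ∈ S, x - x0 ∈ W) : par W x0 '' (par W x0 ⁻¹' S) = S := by
  rw [Set.image_preimage_eq_iff]
  intro x hx
  exact ⟨⟨x - x0, h x hx⟩, by simp [par_apply]⟩

lemma meas_pos {n k : ℕ} (S : Finset (Euc n)) (hS : S.card = k + 1) (iS : ind S) :
    0 < (μH[(k : ℝ)] (convexHull ℝ (S : Set (Euc n)))).toReal := by
  obtain ⟨x0, hx0⟩ : S.Nonempty := by rw [← Finset.card_pos]; omega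
  set W := vectorSpan ℝ (S : Set (Euc n)) with hW
  have hrank : Module.finrank ℝ W = k := by
    have := AffineIndependent.finrank_vectorSpan iS (n := k) (by simpa using hS)
    have h2 : Set.range ((↑) : S → Euc n) = (S : Set (Euc n)) := Subtype.range_coe
    have h3 : W = vectorSpan ℝ (Set.range ((↑) : S → Euc n)) := by rw [h2]
    rw [h3]
    exact this
  have hsub : ∀ x ∈ (S : Set (Euc n)), x - x0 ∈ W := fun x hx => vsub_mem_vectorSpan ℝ hx hx0
  have himg := par_image_preimage W x0 _ hsub
  set T := par W x0 ⁻¹' (S : Set (Euc n)) with hT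
  have h1 : μH[(k : ℝ)] (convexHull ℝ (S : Set (Euc n))) = μH[(k : ℝ)] (convexHull ℝ T) := by
    rw [← himg, ← AffineMap.image_convexHull, (par_isom W x0).hausdorffMeasure_image (by simp)]
  rw [h1, ← hrank]
  have hTfin : T.Finite := S.finite_toSet.preimage (par_isom W x0).injective.injOn
  have hTne : T.Nonempty := ⟨0, by simp [hT, par_apply, hx0]⟩
  have hvs : vectorSpan ℝ T = ⊤ := by
    have := AffineMap.map_vectorSpan (f := par W x0) (s := T)
    rw [himg] at this
    have hl : (par W x0).linear = W.subtype := by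
      ext1 x
      simp [par]
    rw [hl, ← hW] at this
    have h3 : Submodule.map W.subtype (vectorSpan ℝ T) = Submodule.map W.subtype ⊤ := by
      rw [this]; simp
    exact Submodule.map_injective_of_injective W.injective_subtype h3
  have hinter : (interior (convexHull ℝ T)).Nonempty := by
    rw [interior_convexHull_nonempty_iff_affineSpan_eq_top,
      AffineSubspace.affineSpan_eq_top_iff_vectorSpan_eq_top_of_nonempty ℝ W W hTne]
    exact hvs
  apply ENNReal.toReal_pos
  · exact (Measure.measure_pos_of_nonempty_interior _ hinter).ne'
  · exact (hTfin.isCompact_convexHull ℝ).measure_lt_top.ne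

open scoped Classical in
lemma meas_ratio {n k : ℕ} (r : Finset (Euc n)) (x0 p q P Q : Euc n) (hx0 : x0 ∈ r)
    (hP : P ≠ 0) (hQ : Q ≠ 0)
    (hPr : ∀ w ∈ vectorSpan ℝ (r : Set (Euc n)), ⟪P, w⟫ = 0)
    (hQr : ∀ w ∈ vectorSpan ℝ (r : Set (Euc n)), ⟪Q, w⟫ = 0)
    (hp : p - x0 - P ∈ vectorSpan ℝ (r : Set (Euc n)))
    (hq : q - x0 - Q ∈ vectorSpan ℝ (r : Set (Euc n)))
    (hk : Module.finrank ℝ (vectorSpan ℝ (insert p (r : Set (Euc n)))) = k) :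
    μH[(k : ℝ)] (convexHull ℝ (insert q (r : Set (Euc n)))) =
      ENNReal.ofReal (‖Q‖ / ‖P‖) * μH[(k : ℝ)] (convexHull ℝ (insert p (r : Set (Euc n)))) := by
  have hPn : 0 < ‖P‖ := norm_pos_iff.2 hP
  have hQn : 0 < ‖Q‖ := norm_pos_iff.2 hQ
  set R := vectorSpan ℝ (r : Set (Euc n)) with hR
  set W := vectorSpan ℝ (insert p (r : Set (Euc n))) with hW
  have hRW : R ≤ W := vectorSpan_mono ℝ (Set.subset_insert _ _)
  have hpW : p - x0 ∈ W := vsub_mem_vectorSpan ℝ (Set.mem_insert _ _) (Set.mem_insert_of_mem _ hx0)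
  have hPW : P ∈ W := by
    have := W.sub_mem hpW (hRW hp)
    simpa using this
  -- the reflection
  set Z : Euc n := (‖P‖ / ‖Q‖) • Q with hZ
  have hZn : ‖Z‖ = ‖P‖ := by
    rw [hZ, norm_smul, Real.norm_of_nonneg (by positivity)]; field_simp
  set J := Submodule.reflection (ℝ ∙ (Z - P))ᗮ with hJ
  have hJZ : J Z = P := Submodule.reflection_sub hZn
  have hJQ : J Q = (‖Q‖ / ‖P‖) • P := by
    have hQZ : Q = (‖Q‖ / ‖P‖) • Z := by
      rw [hZ, smul_smul, div_mul_div_cancel₀ hPn.ne', div_self hQn.ne', one_smul]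
    calc J Q = J ((‖Q‖ / ‖P‖) • Z) := by rw [← hQZ]
      _ = _ := by rw [map_smul, hJZ]
  have hJR : ∀ w ∈ R, J w = w := by
    intro w hw
    apply Submodule.reflection_mem_subspace_eq_self
    rw [Submodule.mem_orthogonal_singleton_iff_inner_right, inner_sub_left, hPr w hw, hZ,
      inner_smul_left, hQr w hw]
    simp
  let j : Euc n →ᵃ[ℝ] Euc n :=
    (J : Euc n →ₗ[ℝ] Euc n).toAffineMap + AffineMap.const ℝ (Euc n) (x0 - J x0)
  have hj : ∀ x, j x = J (x - x0) + x0 := by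
    intro x
    simp [j]
    abel
  have hjiso : Isometry j := by
    apply Isometry.of_dist_eq
    intro x y
    rw [hj, hj, dist_add_right, J.dist_map, dist_sub_right]
  have hxR : ∀ x ∈ (r : Set (Euc n)), x - x0 ∈ R := fun x hx => vsub_mem_vectorSpan ℝ hx hx0
  have hjr : j '' (r : Set (Euc n)) = r := by
    have : ∀ x ∈ (r : Set (Euc n)), j x = x := by
      intro x hx
      rw [hj, hJR _ (hxR x hx)]; simp
    rw [Set.image_congr this]; simp
  have hjq : j q = (q - x0 - Q) + (‖Q‖ / ‖P‖) • P + x0 := by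
    rw [hj]
    have : q - x0 = (q - x0 - Q) + Q := by simp
    conv_lhs => rw [this]
    rw [map_add, hJR _ hq, hJQ]
  have e1 : μH[(k : ℝ)] (convexHull ℝ (insert q (r : Set (Euc n)))) =
      μH[(k : ℝ)] (convexHull ℝ (insert (j q) (r : Set (Euc n)))) := by
    conv_rhs => rw [← hjr, ← Set.image_insert_eq, ← AffineMap.image_convexHull]
    rw [hjiso.hausdorffMeasure_image (by simp)]
  -- the transvection
  have hvW : j q - p ∈ W := by
    have h2 : j q - p = (q - x0 - Q) + (‖Q‖ / ‖P‖) • P - (p - x0) := by rw [hjq]; abel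
    rw [h2]
    exact W.sub_mem (W.add_mem (hRW hq) (W.smul_mem _ hPW)) hpW
  let f : Module.Dual ℝ W := (1 / ‖P‖ ^ 2) • ((innerSL ℝ P).toLinearMap.comp W.subtype)
  have hf : ∀ w : W, f w = (1 / ‖P‖ ^ 2) * ⟪P, (w : Euc n)⟫ := fun w => rfl
  let v : W := ⟨j q - p, hvW⟩
  let T := LinearMap.transvection f v
  have hTa : ∀ w, T w = w + f w • v := fun w => rfl
  have hPp : ⟪P, p - x0⟫ = ‖P‖ ^ 2 := by
    have := hPr _ hp
    rw [inner_sub_right, real_inner_self_eq_norm_sq] at this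
    linarith
  have hPjq : ⟪P, j q - x0⟫ = ‖Q‖ * ‖P‖ := by
    rw [hjq, add_sub_cancel_right, inner_add_right, hPr _ hq, inner_smul_right,
      real_inner_self_eq_norm_sq]
    field_simp
    ring
  have hdet : LinearMap.det T = ‖Q‖ / ‖P‖ := by
    rw [LinearMap.transvection.det, hf]
    have : ⟪P, ((v : W) : Euc n)⟫ = ‖Q‖ * ‖P‖ - ‖P‖ ^ 2 := by
      rw [← hPjq, ← hPp, ← inner_sub_right]
      congr 1
      simp [v]
    rw [this]
    field_simp
    ring
  have hsub : ∀ x ∈ insert p (r : Set (Euc n)), x - x0 ∈ W := fun x hx =>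
    vsub_mem_vectorSpan ℝ hx (Set.mem_insert_of_mem _ hx0)
  have himg := par_image_preimage W x0 _ hsub
  set C := par W x0 ⁻¹' (insert p (r : Set (Euc n))) with hC
  have e2 : μH[(k : ℝ)] (convexHull ℝ (insert p (r : Set (Euc n)))) = μH[(k : ℝ)] (convexHull ℝ C) := by
    rw [← himg, ← AffineMap.image_convexHull, (par_isom W x0).hausdorffMeasure_image (by simp)]
  have hTp : ∀ w : W, par W x0 w = p → par W x0 (T w) = j q := by
    intro w hw
    rw [par_apply] at hw ⊢
    have hw' : (w : Euc n) = p - x0 := by rw [← hw]; simp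
    have : f w = 1 := by
      rw [hf, hw', hPp]; field_simp
    rw [hTa, this, one_smul]
    simp only [Submodule.coe_add, v, hw']
    abel
  have hTr : ∀ w : W, par W x0 w ∈ (r : Set (Euc n)) → par W x0 (T w) = par W x0 w := by
    intro w hw
    have hw2 := hxR _ hw
    rw [par_apply, add_sub_cancel_right] at hw2
    have : f w = 0 := by rw [hf, hPr _ hw2]; simp
    rw [hTa, this, zero_smul, add_zero]
  have hTC : par W x0 '' (T '' C) = insert (j q) (r : Set (Euc n)) := by
    rw [Set.image_image]
    ext y
    constructor
    · rintro ⟨w, hw, rfl⟩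
      rcases hw with hw | hw
      · left; exact hTp w hw
      · right; simpa only [hTr w hw] using hw
    · rintro (hy | hy)
      · refine ⟨⟨p - x0, hpW⟩, ?_, ?_⟩
        · left; simp [par_apply]
        · rw [hy]; apply hTp; simp [par_apply]
      · have hpar : par W x0 ⟨y - x0, hRW (hxR y hy)⟩ = y := by simp [par_apply]
        refine ⟨⟨y - x0, hRW (hxR y hy)⟩, ?_, ?_⟩
        · right; rw [hpar]; exact hy
        · simp only
          rw [hTr _ (by rw [hpar]; exact hy), hpar]
  have e3 : μH[(k : ℝ)] (convexHull ℝ (insert (j q) (r : Set (Euc n)))) =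
      μH[(k : ℝ)] (T '' (convexHull ℝ C)) := by
    rw [← hTC, ← AffineMap.image_convexHull, (par_isom W x0).hausdorffMeasure_image (by simp),
      LinearMap.image_convexHull]
  rw [e1, e2, e3, ← hk, Measure.addHaar_image_linearMap, hdet, abs_of_pos (by positivity)]

lemma bary_mem {n : ℕ} {ι : Type*} [Fintype ι] [Nonempty ι] (b : ι → Euc n) :
    bary b ∈ affineSpan ℝ (Set.range b) := by
  have hc : (Fintype.card ι : ℝ) ≠ 0 := by exact_mod_cast Fintype.card_ne_zero
  have hw : ∑ _i : ι, (Fintype.card ι : ℝ)⁻¹ = 1 := by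
    simp [hc]
  have := affineCombination_mem_affineSpan (k := ℝ) (s := Finset.univ)
    (w := fun _ => (Fintype.card ι : ℝ)⁻¹) hw b
  rw [Finset.affineCombination_eq_linear_combination _ _ _ hw] at this
  rwa [bary, Finset.smul_sum]

lemma conormal_spec {n K : ℕ} (b : Fin (K + 2) → Euc n) (hb : AffineIndependent ℝ b)
    (i : Fin (K + 2)) : IsConormal b i (conormal b i) := by
  suffices h : ∃ v, IsConormal b i v by
    rw [conormal, dif_pos h]
    exact h.choose_spec
  obtain ⟨j0, hj0⟩ := exists_ne i
  have : Nonempty {j : Fin (K + 2) // j ≠ i} := ⟨⟨j0, hj0⟩⟩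
  have hB := bary_mem (face b i)
  have hrange : Set.range (face b i) ⊆ Set.range b := by
    rintro _ ⟨j, rfl⟩; exact ⟨j.1, rfl⟩
  set W := vectorSpan ℝ (Set.range (face b i)) with hW
  have hWV : W ≤ vectorSpan ℝ (Set.range b) := vectorSpan_mono ℝ hrange
  have hx : b i - bary (face b i) ∉ W := by
    intro h
    rw [hW, ← direction_affineSpan] at h
    have h2 := AffineSubspace.vadd_mem_of_mem_direction h hB
    have h3 : (b i - bary (face b i)) +ᵥ bary (face b i) = b i := by simp
    rw [h3] at h2
    have h4 := AffineIndependent.notMem_affineSpan_sdiff hb i Set.univ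
    apply h4
    refine affineSpan_mono ℝ ?_ h2
    rintro _ ⟨j, rfl⟩
    exact ⟨j.1, ⟨trivial, j.2⟩, rfl⟩
  have hxV : b i - bary (face b i) ∈ vectorSpan ℝ (Set.range b) := by
    rw [← direction_affineSpan]
    exact AffineSubspace.vsub_mem_direction (mem_affineSpan ℝ ⟨i, rfl⟩) (affineSpan_mono ℝ hrange hB)
  obtain ⟨w, hw, y, hy, hwy⟩ := W.exists_add_mem_mem_orthogonal (b i - bary (face b i))
  have hy0 : y ≠ 0 := by
    rintro rfl
    rw [add_zero] at hwy
    exact hx (hwy ▸ hw)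
  have hyn : 0 < ‖y‖ := norm_pos_iff.2 hy0
  refine ⟨-(‖y‖⁻¹ • y), ?_, ?_, ?_, ?_⟩
  · apply Submodule.neg_mem
    apply Submodule.smul_mem
    have : y = (b i - bary (face b i)) - w := by rw [hwy]; simp
    rw [this]
    exact Submodule.sub_mem _ hxV (hWV hw)
  · rw [norm_neg, norm_smul, norm_inv, norm_norm, inv_mul_cancel₀ hyn.ne']
  · intro z hz
    have : ⟪y, z⟫ = 0 := (Submodule.mem_orthogonal' _ _).1 hy z hz
    rw [inner_neg_left, inner_smul_left, this]
    simp
  · have : ⟪y, w⟫ = 0 := (Submodule.mem_orthogonal' _ _).1 hy w hw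
    rw [hwy, inner_neg_left, inner_smul_left, inner_add_right, this, real_inner_self_eq_norm_sq]
    simp only [zero_add, map_inv₀, RCLike.conj_to_real, neg_lt_zero]
    positivity

lemma planar {n : ℕ} (P Q v : Euc n) (a b : ℝ) (hv : v = a • P + b • Q) (hvQ : ⟪v, Q⟫ = 0)
    (h1 : ‖v‖ = 1) : ⟪v, P⟫ ^ 2 * ‖Q‖ ^ 2 = ‖P‖ ^ 2 * ‖Q‖ ^ 2 - ⟪P, Q⟫ ^ 2 := by
  have e1 : ⟪v, v⟫ = 1 := by rw [real_inner_self_eq_norm_sq, h1]; norm_num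
  have e2 : ⟪v, v⟫ = a * ⟪v, P⟫ + b * ⟪v, Q⟫ := by
    nth_rewrite 2 [hv]
    rw [inner_add_right, inner_smul_right, inner_smul_right]
  have e3 : ⟪v, P⟫ = a * ‖P‖ ^ 2 + b * ⟪P, Q⟫ := by
    rw [hv, inner_add_left, inner_smul_left, inner_smul_left, real_inner_self_eq_norm_sq,
      real_inner_comm P Q]
    simp
  have e4 : ⟪v, Q⟫ = a * ⟪P, Q⟫ + b * ‖Q‖ ^ 2 := by
    rw [hv, inner_add_left, inner_smul_left, inner_smul_left, real_inner_self_eq_norm_sq]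
    simp
  rw [hvQ, e1] at e2
  rw [hvQ] at e4
  generalize ⟪v, P⟫ = α at *
  generalize ⟪P, Q⟫ = c at *
  generalize ‖P‖ ^ 2 = x at *
  generalize ‖Q‖ ^ 2 = y at *
  have e5 : a * α = 1 := by linarith
  have e6 : α * y = a * (x * y - c ^ 2) := by rw [e3]; linear_combination (-c) * e4
  linear_combination α * e6 + (x * y - c ^ 2) * e5

lemma planar_decomp {n : ℕ} (r : Set (Euc n)) (x0 p q P Q v : Euc n) (hx0 : x0 ∈ r)
    (hPr : ∀ w ∈ vectorSpan ℝ r, ⟪P, w⟫ = 0)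
    (hQr : ∀ w ∈ vectorSpan ℝ r, ⟪Q, w⟫ = 0)
    (hp : p - x0 - P ∈ vectorSpan ℝ r)
    (hq : q - x0 - Q ∈ vectorSpan ℝ r)
    (hv : v ∈ vectorSpan ℝ (insert p (insert q r)))
    (hvr : ∀ w ∈ vectorSpan ℝ r, ⟪v, w⟫ = 0) : ∃ a b : ℝ, v = a • P + b • Q := by
  have hle : vectorSpan ℝ (insert p (insert q r)) ≤ vectorSpan ℝ r ⊔ Submodule.span ℝ {P, Q} := by
    rw [vectorSpan_eq_span_vsub_set_right ℝ
      (Set.mem_insert_of_mem p (Set.mem_insert_of_mem q hx0)), Submodule.span_le]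
    rintro _ ⟨y, hy, rfl⟩
    simp only [vsub_eq_sub]
    rcases hy with rfl | rfl | hy
    · have : y - x0 = (y - x0 - P) + P := by simp
      rw [this]
      exact Submodule.add_mem_sup hp (Submodule.subset_span (by simp))
    · have : y - x0 = (y - x0 - Q) + Q := by simp
      rw [this]
      exact Submodule.add_mem_sup hq (Submodule.subset_span (by simp))
    · exact Submodule.mem_sup_left (vsub_mem_vectorSpan ℝ hy hx0)
  obtain ⟨w, hw, z, hz, hwz⟩ := Submodule.mem_sup.1 (hle hv)
  obtain ⟨a, b, hab⟩ := Submodule.mem_span_pair.1 hz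
  refine ⟨a, b, ?_⟩
  have hzw : ⟪z, w⟫ = 0 := by
    rw [← hab, inner_add_left, inner_smul_left, inner_smul_left, hPr w hw, hQr w hw]
    simp
  have h0 := hvr w hw
  rw [← hwz, inner_add_left, hzw, add_zero, inner_self_eq_zero] at h0
  rw [← hwz, h0, zero_add, hab]

lemma matVec_rankOne {n : ℕ} (v x : Euc n) : matVec (rankOne v) x = ⟪v, x⟫ • v := by
  ext i
  simp [matVec, rankOne, Matrix.toLpLin_apply, Matrix.mulVec, dotProduct, PiLp.inner_apply, Finset.sum_mul]
  apply Finset.sum_congr rfl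
  intro j _
  ring

lemma rankOne_symm {n : ℕ} (v : Euc n) : (rankOne v).IsSymm := by
  ext i j
  simp [rankOne, mul_comm]

open scoped Classical in
/-- the balance of forces in an elementary beam -/
lemma balance {n k : ℕ} (r : Finset (Euc n)) (hr : r.card = k) (ir : ind r) (p q v w : Euc n)
    (hp : p ∉ affineSpan ℝ (r : Set (Euc n)))
    (hq : q ∉ affineSpan ℝ (insert p (r : Set (Euc n))))
    (hv : v ∈ vectorSpan ℝ (insert p (insert q (r : Set (Euc n)))))
    (hw : w ∈ vectorSpan ℝ (insert p (insert q (r : Set (Euc n)))))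
    (hv1 : ‖v‖ = 1) (hw1 : ‖w‖ = 1)
    (hvo : ∀ x ∈ vectorSpan ℝ (insert q (r : Set (Euc n))), ⟪v, x⟫ = 0)
    (hwo : ∀ x ∈ vectorSpan ℝ (insert p (r : Set (Euc n))), ⟪w, x⟫ = 0)
    (hvn : ⟪v, p - q⟫ < 0) (hwn : 0 < ⟪w, p - q⟫) :
    (μH[(k : ℝ)] (convexHull ℝ (insert q (r : Set (Euc n))))).toReal * ⟪v, p - q⟫ +
    (μH[(k : ℝ)] (convexHull ℝ (insert p (r : Set (Euc n))))).toReal * ⟪w, p - q⟫ = 0 := by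
  rcases r.eq_empty_or_nonempty with rfl | ⟨x0, hx0⟩
  · simp only [Finset.card_empty] at hr
    subst hr
    simp only [Finset.coe_empty, insert_empty_eq, convexHull_singleton, Nat.cast_zero,
      Measure.hausdorffMeasure_zero_singleton, ENNReal.toReal_one, one_mul] at *
    rw [mem_vectorSpan_pair] at hv hw
    obtain ⟨a, rfl⟩ := hv
    obtain ⟨b, rfl⟩ := hw
    simp only [vsub_eq_sub, norm_smul, inner_smul_left, real_inner_self_eq_norm_sq,
      RCLike.conj_to_real, Real.norm_eq_abs] at *
    have hpos : 0 < ‖p - q‖ ^ 2 := by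
      rcases eq_or_ne (‖p - q‖) 0 with h | h
      · rw [h] at hv1; simp at hv1
      · positivity
    have ha : a < 0 := by
      by_contra h
      nlinarith [mul_nonneg (not_lt.1 h) hpos.le]
    have hb : 0 < b := by
      by_contra h
      nlinarith [mul_nonneg (neg_nonneg.2 (not_lt.1 h)) hpos.le]
    rw [abs_of_neg ha] at hv1
    rw [abs_of_pos hb] at hw1
    nlinarith
  · have hqr : q ∉ affineSpan ℝ (r : Set (Euc n)) := fun h =>
        hq (affineSpan_mono ℝ (Set.subset_insert _ _) h)
    have hx0a : x0 ∈ affineSpan ℝ (r : Set (Euc n)) := mem_affineSpan ℝ hx0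
    have hpr : p ∉ r := fun h => hp (mem_affineSpan ℝ (by exact_mod_cast h))
    set R := vectorSpan ℝ (r : Set (Euc n)) with hR
    have hex : ∀ y, y ∉ affineSpan ℝ (r : Set (Euc n)) → ∃ Y : Euc n, Y ≠ 0 ∧
        (∀ w ∈ R, ⟪Y, w⟫ = 0) ∧ y - x0 - Y ∈ R := by
      intro y hy
      obtain ⟨z, hz, Y, hY, hzY⟩ := R.exists_add_mem_mem_orthogonal (y - x0)
      refine ⟨Y, ?_, fun w hw => (Submodule.mem_orthogonal' _ _).1 hY w hw, by rw [hzY]; simpa using hz⟩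
      rintro rfl
      apply hy
      rw [add_zero] at hzY
      rw [← hzY, hR, ← direction_affineSpan] at hz
      have := AffineSubspace.vadd_mem_of_mem_direction hz hx0a
      simpa using this
    obtain ⟨P, hP0, hPr, hPp⟩ := hex p hp
    obtain ⟨Q, hQ0, hQr, hQq⟩ := hex q hqr
    have hrank : Module.finrank ℝ (vectorSpan ℝ (insert p (r : Set (Euc n)))) = k := by
      have i1 := ind_insert ir hp
      have := AffineIndependent.finrank_vectorSpan i1 (n := k)
        (by simp [Finset.card_insert_of_notMem hpr, hr])
      have h2 : Set.range ((↑) : {x // x ∈ insert p r} → Euc n) = insert p (r : Set (Euc n)) := by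
        rw [← Finset.coe_insert]; exact Subtype.range_coe
      have h3 : vectorSpan ℝ (insert p (r : Set (Euc n))) =
        vectorSpan ℝ (Set.range ((↑) : {x // x ∈ insert p r} → Euc n)) := by rw [h2]
      rw [h3]
      exact this
    have hm := meas_ratio r x0 p q P Q hx0 hP0 hQ0 hPr hQr hPp hQq hrank
    have hRq : R ≤ vectorSpan ℝ (insert q (r : Set (Euc n))) := vectorSpan_mono ℝ (Set.subset_insert _ _)
    have hRp : R ≤ vectorSpan ℝ (insert p (r : Set (Euc n))) := vectorSpan_mono ℝ (Set.subset_insert _ _)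
    have hvR : ∀ x ∈ R, ⟪v, x⟫ = 0 := fun x hx => hvo x (hRq hx)
    have hwR : ∀ x ∈ R, ⟪w, x⟫ = 0 := fun x hx => hwo x (hRp hx)
    obtain ⟨a, b, hab⟩ := planar_decomp (r : Set (Euc n)) x0 p q P Q v hx0 hPr hQr hPp hQq hv hvR
    obtain ⟨a', b', hab'⟩ := planar_decomp (r : Set (Euc n)) x0 p q P Q w hx0 hPr hQr hPp hQq hw hwR
    have hvq : ⟪v, q - x0⟫ = 0 :=
      hvo _ (vsub_mem_vectorSpan ℝ (Set.mem_insert _ _) (Set.mem_insert_of_mem _ hx0))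
    have hwp : ⟪w, p - x0⟫ = 0 :=
      hwo _ (vsub_mem_vectorSpan ℝ (Set.mem_insert _ _) (Set.mem_insert_of_mem _ hx0))
    have h1 := hvR _ hPp
    have h2 := hvR _ hQq
    have h3 := hwR _ hPp
    have h4 := hwR _ hQq
    rw [inner_sub_right] at h1 h2 h3 h4
    have hvQ : ⟪v, Q⟫ = 0 := by linarith
    have hwP : ⟪w, P⟫ = 0 := by linarith
    have hvpq : ⟪v, p - q⟫ = ⟪v, P⟫ := by
      have : p - q = (p - x0) - (q - x0) := by abel
      rw [this, inner_sub_right]; linarith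
    have hwpq : ⟪w, p - q⟫ = - ⟪w, Q⟫ := by
      have : p - q = (p - x0) - (q - x0) := by abel
      rw [this, inner_sub_right]; linarith
    have k1 := planar P Q v a b hab hvQ hv1
    have k2 := planar Q P w b' a' (by rw [hab', add_comm]) hwP hw1
    rw [real_inner_comm P Q] at k2
    have hPn : 0 < ‖P‖ := norm_pos_iff.2 hP0
    have hQn : 0 < ‖Q‖ := norm_pos_iff.2 hQ0
    rw [hm, ENNReal.toReal_mul, ENNReal.toReal_ofReal (by positivity)]
    rw [hvpq] at hvn ⊢
    rw [hwpq] at hwn ⊢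
    have key : - ⟪v, P⟫ * ‖Q‖ = - ⟪w, Q⟫ * ‖P‖ := by
      have hsq : (- ⟪v, P⟫ * ‖Q‖) ^ 2 = (- ⟪w, Q⟫ * ‖P‖) ^ 2 := by linarith
      exact (pow_left_inj₀ (mul_nonneg (by linarith) hQn.le) (mul_nonneg hwn.le hPn.le)
        two_ne_zero).1 hsq
    generalize (μH[(k : ℝ)] (convexHull ℝ (insert p (r : Set (Euc n))))).toReal = H
    field_simp
    linear_combination (-H) * key

open scoped Classical in
/-- elementary beams: exchange of normalised measures -/
lemma elem_beam {n k : ℕ} (r : Finset (Euc n)) (hr : r.card = k) (ir : ind r) (p q : Euc n)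
    (hp : p ∉ affineSpan ℝ (r : Set (Euc n)))
    (hq : q ∉ affineSpan ℝ (insert p (r : Set (Euc n)))) :
    ∃ (b : Fin (k + 2) → Euc n) (α β : ℝ), AffineIndependent ℝ b ∧
      Structural (rankOne (p - q)) b ∧ 0 < β ∧
      (μH[(k : ℝ)] (convexHull ℝ (insert q (r : Set (Euc n))))).toReal * α +
      (μH[(k : ℝ)] (convexHull ℝ (insert p (r : Set (Euc n))))).toReal * β = 0 ∧
      ∀ X, beam (rankOne (p - q)) b X =
        ((μH[(k : ℝ)] (X ∩ convexHull ℝ (insert q (r : Set (Euc n))))).toReal * α +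
        (μH[(k : ℝ)] (X ∩ convexHull ℝ (insert p (r : Set (Euc n))))).toReal * β) • (p - q) := by
  let e := r.equivFinOfCardEq hr
  let ρ : Fin k → Euc n := fun i => (e.symm i : Euc n)
  have hρ : Set.range ρ = (r : Set (Euc n)) := by
    ext x
    constructor
    · rintro ⟨i, rfl⟩
      exact (e.symm i).2
    · intro hx
      exact ⟨e ⟨x, hx⟩, by simp [ρ]⟩
  have hρi : Function.Injective ρ := fun i j h => e.symm.injective (Subtype.ext h)
  have hpr : p ∉ r := fun h => hp (mem_affineSpan ℝ (by exact_mod_cast h))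
  have hqr : q ∉ insert p (r : Set (Euc n)) := fun h => hq (mem_affineSpan ℝ h)
  let b : Fin (k + 2) → Euc n := Fin.cons p (Fin.cons q ρ)
  have b0 : b 0 = p := rfl
  have b1 : b 1 = q := rfl
  have bs : ∀ i : Fin k, b i.succ.succ = ρ i := fun i => rfl
  have hbr : Set.range b = insert p (insert q (r : Set (Euc n))) := by
    rw [← hρ]
    simp only [b, Fin.range_cons]
  have hbi : Function.Injective b := by
    simp only [b, Fin.cons_injective_iff, Fin.range_cons, hρ]
    refine ⟨?_, ?_, hρi⟩
    · rintro (h | h)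
      · exact hqr (h ▸ Set.mem_insert _ _)
      · exact hpr (by exact_mod_cast h)
    · intro h
      exact hqr (Set.mem_insert_of_mem _ h)
  have iqpr : ind (insert q (insert p r)) := by
    apply ind_insert (ind_insert ir hp)
    rwa [Finset.coe_insert]
  have hb : AffineIndependent ℝ b := by
    apply AffineIndependent.of_set_of_injective _ hbi
    have : Set.range b = ((insert q (insert p r) : Finset (Euc n)) : Set (Euc n)) := by
      rw [hbr, Finset.coe_insert, Finset.coe_insert, Set.insert_comm]
    rw [this]
    exact iqpr
  have f0 : Set.range (face b 0) = insert q (r : Set (Euc n)) := by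
    rw [← hρ]
    ext x
    constructor
    · rintro ⟨⟨j, hj⟩, rfl⟩
      refine Fin.cases (fun h => absurd rfl h) (fun j => ?_) j hj
      refine Fin.cases (fun _ => Set.mem_insert _ _) (fun j => ?_) j
      intro _
      exact Set.mem_insert_of_mem _ ⟨j, rfl⟩
    · rintro (rfl | ⟨j, rfl⟩)
      · exact ⟨⟨1, by simp⟩, rfl⟩
      · exact ⟨⟨j.succ.succ, Fin.succ_ne_zero _⟩, rfl⟩
  have f1 : Set.range (face b 1) = insert p (r : Set (Euc n)) := by
    rw [← hρ]
    ext x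
    constructor
    · rintro ⟨⟨j, hj⟩, rfl⟩
      refine Fin.cases (fun _ => Set.mem_insert _ _) (fun j => ?_) j hj
      refine Fin.cases (fun h => absurd rfl h) (fun j => ?_) j
      intro _
      exact Set.mem_insert_of_mem _ ⟨j, rfl⟩
    · rintro (rfl | ⟨j, rfl⟩)
      · exact ⟨⟨0, by simp⟩, rfl⟩
      · refine ⟨⟨j.succ.succ, fun h => ?_⟩, rfl⟩
        exact Fin.succ_ne_zero _ (Fin.succ_injective _ h)
  obtain ⟨c0V, c0n, c0o, c0s⟩ := conormal_spec b hb 0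
  obtain ⟨c1V, c1n, c1o, c1s⟩ := conormal_spec b hb 1
  have hne0 : Nonempty {j : Fin (k + 2) // j ≠ 0} := ⟨⟨1, by simp⟩⟩
  have hne1 : Nonempty {j : Fin (k + 2) // j ≠ 1} := ⟨⟨0, by simp⟩⟩
  have m0 := bary_mem (face b 0)
  have m1 := bary_mem (face b 1)
  have s0 : ⟪conormal b 0, p - q⟫ < 0 := by
    have : bary (face b 0) - q ∈ vectorSpan ℝ (Set.range (face b 0)) := by
      rw [← direction_affineSpan]
      exact AffineSubspace.vsub_mem_direction m0 (mem_affineSpan ℝ (f0 ▸ Set.mem_insert _ _))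
    have h2 := c0o _ this
    rw [b0] at c0s
    have : p - q = (p - bary (face b 0)) + (bary (face b 0) - q) := by abel
    rw [this, inner_add_right, h2, add_zero]
    exact c0s
  have s1 : 0 < ⟪conormal b 1, p - q⟫ := by
    have : bary (face b 1) - p ∈ vectorSpan ℝ (Set.range (face b 1)) := by
      rw [← direction_affineSpan]
      exact AffineSubspace.vsub_mem_direction m1 (mem_affineSpan ℝ (f1 ▸ Set.mem_insert _ _))
    have h2 := c1o _ this
    rw [b1] at c1s
    have : p - q = - ((q - bary (face b 1)) + (bary (face b 1) - p)) := by abel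
    rw [this, inner_neg_right, inner_add_right, h2, add_zero]
    linarith
  have hcast : (((k + 2 : ℕ) : ℝ) - 2) = (k : ℝ) := by push_cast; ring
  have hz : ∀ i : Fin k, ⟪p - q, conormal b i.succ.succ⟫ = 0 := by
    intro i
    obtain ⟨_, _, co, _⟩ := conormal_spec b hb i.succ.succ
    rw [real_inner_comm]
    apply co
    apply vsub_mem_vectorSpan ℝ
    · exact ⟨⟨0, (Fin.succ_ne_zero _).symm⟩, rfl⟩
    · exact ⟨⟨1, fun h => (Fin.succ_ne_zero i) (Fin.succ_injective _ (h.symm : i.succ.succ = Fin.succ 0))⟩, rfl⟩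
  refine ⟨b, ⟪conormal b 0, p - q⟫, ⟪conormal b 1, p - q⟫, hb, ?_, s1, ?_, ?_⟩
  · intro x
    rw [matVec_rankOne]
    apply Submodule.smul_mem
    apply vsub_mem_vectorSpan ℝ
    · exact ⟨0, rfl⟩
    · exact ⟨1, rfl⟩
  · exact balance r hr ir p q _ _ hp hq (hbr ▸ c0V) (hbr ▸ c1V) c0n c1n (f0 ▸ c0o) (f1 ▸ c1o) s0 s1
  · intro X
    rw [beam, Fin.sum_univ_succ, Fin.sum_univ_succ]
    have h0 : ∑ i : Fin k, (μH[((k + 2 : ℕ) : ℝ) - 2]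
        (X ∩ simplexSet (face b i.succ.succ))).toReal •
        matVec (rankOne (p - q)) (conormal b i.succ.succ) = 0 := by
      apply Finset.sum_eq_zero
      intro i _
      rw [matVec_rankOne, hz, zero_smul, smul_zero]
    rw [h0, add_zero, matVec_rankOne, matVec_rankOne, hcast]
    have h1 : (Fin.succ 0 : Fin (k + 2)) = 1 := rfl
    rw [h1, simplexSet, simplexSet, f0, f1, real_inner_comm, real_inner_comm (p - q) (conormal b 1), add_smul,
      mul_smul, mul_smul]

lemma beam_smul {n K : ℕ} (c : ℝ) (A : Matrix (Fin n) (Fin n) ℝ) (b : Fin K → Euc n) :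
    beam (c • A) b = c • beam A b := by
  ext1 X
  simp only [beam, matVec, Pi.smul_apply, Finset.smul_sum, map_smul, LinearMap.smul_apply]
  apply Finset.sum_congr rfl
  intro i _
  rw [smul_comm]

/-- the set of beams -/
def beamSet (n K : ℕ) : Set (Set (Euc n) → Euc n) :=
  {G | ∃ (τ : Fin K → Euc n) (A : Matrix (Fin n) (Fin n) ℝ), AffineIndependent ℝ τ ∧ A.IsSymm ∧
    Structural A τ ∧ G = beam A τ}

lemma isBeamSum_of_span {n K : ℕ} (G : Set (Euc n) → Euc n)
    (h : G ∈ Submodule.span ℝ (beamSet n K)) : IsBeamSum K G := by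
  obtain ⟨m, c, g, hg⟩ := Submodule.mem_span_set'.1 h
  choose τ A h1 h2 h3 h4 using fun j => (g j).2
  refine ⟨m, τ, fun j => c j • A j, h1, ?_, ?_, ?_⟩
  · intro j
    have := h2 j
    unfold Matrix.IsSymm at this ⊢
    rw [Matrix.transpose_smul, this]
  · intro j v
    have := h3 j v
    simp only [matVec, map_smul, LinearMap.smul_apply] at this ⊢
    exact Submodule.smul_mem _ _ this
  · rw [← hg]
    ext1 X
    rw [Finset.sum_apply]
    apply Finset.sum_congr rfl
    intro j _
    rw [beam_smul, h4 j]

/-- the normalised point force set function -/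
def nm {n : ℕ} (k : ℕ) (S : Finset (Euc n)) : Euc n →ₗ[ℝ] (Set (Euc n) → Euc n) where
  toFun v := fun X => ((μH[(k : ℝ)] (X ∩ convexHull ℝ (S : Set (Euc n)))).toReal /
    (μH[(k : ℝ)] (convexHull ℝ (S : Set (Euc n)))).toReal) • v
  map_add' v w := by ext1 X; simp
  map_smul' c v := by ext1 X; simp [smul_comm c]

/-- the dual vector -/
def PhiV {n : ℕ} (k : ℕ) (φ : (Set (Euc n) → Euc n) →ₗ[ℝ] ℝ) (S : Finset (Euc n)) : Euc n :=
  (InnerProductSpace.toDual ℝ (Euc n)).symm (LinearMap.toContinuousLinearMap (φ ∘ₗ nm k S))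

lemma PhiV_inner {n : ℕ} (k : ℕ) (φ : (Set (Euc n) → Euc n) →ₗ[ℝ] ℝ) (S : Finset (Euc n))
    (v : Euc n) : ⟪PhiV k φ S, v⟫ = φ (nm k S v) := by
  rw [PhiV, InnerProductSpace.toDual_symm_apply]
  rfl

open scoped Classical in
lemma PhiV_exchange {n k : ℕ} (φ : (Set (Euc n) → Euc n) →ₗ[ℝ] ℝ)
    (hφ : Submodule.span ℝ (beamSet n (k + 2)) ≤ LinearMap.ker φ)
    (r : Finset (Euc n)) (hr : r.card = k) (ir : ind r) (p : Euc n)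
    (hp : p ∉ affineSpan ℝ (r : Set (Euc n))) (q : Euc n)
    (hq : q ∉ affineSpan ℝ (insert p (r : Set (Euc n)))) :
    ⟪PhiV k φ (insert p r) - PhiV k φ (insert q r), p - q⟫ = 0 := by
  obtain ⟨b, α, β, hb, hst, hβ, hbal, hbeam⟩ := elem_beam r hr ir p q hp hq
  have hpr : p ∉ r := fun h => hp (mem_affineSpan ℝ (by exact_mod_cast h))
  have hq' : q ∉ affineSpan ℝ (r : Set (Euc n)) := fun h =>
    hq (affineSpan_mono ℝ (Set.subset_insert _ _) h)
  have hqr : q ∉ r := fun h => hq' (mem_affineSpan ℝ (by exact_mod_cast h))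
  have P1 := meas_pos (k := k) (insert p r) (by rw [Finset.card_insert_of_notMem hpr, hr])
    (ind_insert ir hp)
  have P2 := meas_pos (k := k) (insert q r) (by rw [Finset.card_insert_of_notMem hqr, hr])
    (ind_insert ir hq')
  have h0 : φ (beam (rankOne (p - q)) b) = 0 :=
    hφ (Submodule.subset_span ⟨b, _, hb, rankOne_symm _, hst, rfl⟩)
  rw [inner_sub_left, PhiV_inner, PhiV_inner]
  have key : beam (rankOne (p - q)) b =
      ((μH[(k : ℝ)] (convexHull ℝ ((insert p r : Finset (Euc n)) : Set (Euc n)))).toReal * β) •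
        (nm k (insert p r) (p - q) - nm k (insert q r) (p - q)) := by
    ext1 X
    rw [hbeam]
    simp only [nm, LinearMap.coe_mk, AddHom.coe_mk, Pi.smul_apply, Pi.sub_apply, ← sub_smul,
      smul_smul]
    rw [Finset.coe_insert] at P1 P2 ⊢
    rw [Finset.coe_insert]
    congr 1
    generalize (μH[(k : ℝ)] (X ∩ convexHull ℝ (insert q (r : Set (Euc n))))).toReal = x
    generalize (μH[(k : ℝ)] (X ∩ convexHull ℝ (insert p (r : Set (Euc n))))).toReal = y
    generalize (μH[(k : ℝ)] (convexHull ℝ (insert q (r : Set (Euc n))))).toReal = Hq at *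
    generalize (μH[(k : ℝ)] (convexHull ℝ (insert p (r : Set (Euc n))))).toReal = Hp at *
    have := P1.ne'
    have := P2.ne'
    field_simp
    linear_combination x * hbal
  rw [key, map_smul, map_sub, smul_eq_mul] at h0
  rcases mul_eq_zero.1 h0 with h | h
  · exact absurd h (mul_pos P1 hβ).ne'
  · exact h
/-- (Proposition 1.)  With `k = k' + 1 ≥ 1` and `n ≥ k + 2`, a system
of vertical forces `fᵢ eₙ` on `(k−1)`-simplices lying in the hyperplane
`{x : ⟪x, eₙ⟫ = 0}` that is in equilibrium splits as `F = B + Fʰ`, with `B` a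
finite sum of `k`-beams and `Fʰ` an equilibrium system on the same simplices whose
forces lie in the hyperplane. -/
theorem statement5 {k' n l : ℕ} (hn : k' + 3 ≤ n)
    (en : Euc n) (hen : en = EuclideanSpace.single (⟨n - 1, by omega⟩ : Fin n) 1)
    (s : Fin l → Fin (k' + 1) → Euc n) (hs : ∀ i, AffineIndependent ℝ (s i))
    (hplane : ∀ i, simplexSet (s i) ⊆ {x : Euc n | ⟪x, en⟫ = 0})
    (f : Fin l → ℝ)
    (hequil : equil (k' : ℝ) s (fun i => f i • en)) :
    ∃ (B : Set (Euc n) → Euc n) (Fh : Fin l → Euc n),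
      IsBeamSum (k' + 2) B ∧
      (∀ i, ⟪Fh i, en⟫ = 0) ∧
      equil (k' : ℝ) s Fh ∧
      sys (k' : ℝ) s (fun i => f i • en) = fun S => B S + sys (k' : ℝ) s Fh S := by
  classical
  suffices hmem : sys (k' : ℝ) s (fun i => f i • en) ∈ Submodule.span ℝ (beamSet n (k' + 2)) by
    refine ⟨_, fun _ => 0, isBeamSum_of_span _ hmem, ?_, ⟨?_, ?_⟩, ?_⟩
    · intro i
      exact inner_zero_left _
    · simp
    · apply Finset.sum_eq_zero
      intro i _
      have : wedge (bary (s i)) (0 : Euc n) = 0 := by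
        ext a b
        simp [wedge]
      rw [this, smul_zero]
    · ext1 X
      simp [sys]
  by_contra hnot
  obtain ⟨φ, hφF, hφ⟩ := Submodule.exists_le_ker_of_notMem hnot
  apply hφF
  obtain ⟨M, t, hMt⟩ := rigidity (n := n) (k := k') (by omega) (PhiV k' φ)
    (fun r hr ir p hp q hq => PhiV_exchange φ hφ r hr ir p hp q hq)
  let S : Fin l → Finset (Euc n) := fun i => Finset.univ.image (s i)
  have hScoe : ∀ i, (S i : Set (Euc n)) = Set.range (s i) := fun i => by simp [S]
  have hScard : ∀ i, (S i).card = k' + 1 := fun i => by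
    simp [S, Finset.card_image_of_injective _ (hs i).injective]
  have hSind : ∀ i, ind (S i) := fun i => by
    have h := (hs i).range
    rw [← hScoe i] at h
    exact h
  have hSsum : ∀ i, ∑ x ∈ S i, x = ((k' : ℝ) + 1) • bary (s i) := fun i => by
    have h : ((k' : ℝ) + 1) ≠ 0 := by positivity
    simp only [S, Finset.sum_image (fun a _ b _ h => (hs i).injective h), bary, Fintype.card_fin]
    push_cast
    rw [smul_smul, mul_inv_cancel₀ h, one_smul]
  let H : Fin l → ℝ := fun i => (μH[(k' : ℝ)] (simplexSet (s i))).toReal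
  have hF : sys (k' : ℝ) s (fun i => f i • en) = ∑ i, (H i * f i) • nm k' (S i) en := by
    ext1 X
    rw [Finset.sum_apply, sys]
    apply Finset.sum_congr rfl
    intro i _
    have hpos := meas_pos (S i) (hScard i) (hSind i)
    simp only [nm, LinearMap.coe_mk, AddHom.coe_mk, Pi.smul_apply, smul_smul, H, simplexSet]
    rw [hScoe i] at hpos ⊢
    congr 1
    field_simp
  obtain ⟨e1, e2⟩ := hequil
  have hen' : ∀ p : Fin n, en p = if p = ⟨n - 1, by omega⟩ then 1 else 0 := by
    intro p
    rw [hen]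
    simp
  have hlast : en ⟨n - 1, by omega⟩ = 1 := by rw [hen' _, if_pos rfl]
  have E1 : ∑ i, H i * f i = 0 := by
    have := congrArg (fun v : Euc n => v ⟨n - 1, by omega⟩) e1
    simpa [hlast, H] using this
  have hbl : ∀ i, bary (s i) ⟨n - 1, by omega⟩ = 0 := by
    intro i
    have hv : ∀ j, s i j ⟨n - 1, by omega⟩ = 0 := by
      intro j
      have h := hplane i (subset_convexHull ℝ _ ⟨j, rfl⟩)
      have h' : ⟪s i j, en⟫ = 0 := h
      rw [hen, EuclideanSpace.inner_single_right] at h'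
      simpa using h'
    simp [bary, hv]
  have E2 : ∑ i, (H i * f i) • bary (s i) = 0 := by
    ext p
    by_cases hp : p = ⟨n - 1, by omega⟩
    · subst hp
      simp [hbl]
    · have := congrFun (congrFun e2 p) ⟨n - 1, by omega⟩
      simp only [Matrix.sum_apply, Matrix.smul_apply, wedge, Matrix.of_apply, PiLp.smul_apply,
        hlast, hbl, Matrix.zero_apply, smul_eq_mul] at this
      simp only [WithLp.ofLp_sum, Finset.sum_apply, PiLp.smul_apply, smul_eq_mul, PiLp.zero_apply]
      rw [← this]
      apply Finset.sum_congr rfl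
      intro i _
      ring
  have hfin : φ (sys (k' : ℝ) s (fun i => f i • en)) =
      ⟪M (((k' : ℝ) + 1) • ∑ i, (H i * f i) • bary (s i)) + (∑ i, H i * f i) • t, en⟫ := by
    rw [hF, map_sum, Finset.smul_sum, map_sum, Finset.sum_smul, ← Finset.sum_add_distrib, sum_inner]
    apply Finset.sum_congr rfl
    intro i _
    rw [map_smul, ← PhiV_inner, hMt (S i) (hScard i) (hSind i), hSsum i,
      smul_comm ((k' : ℝ) + 1) (H i * f i), map_smul M (H i * f i), ← smul_add, inner_smul_left]
    rfl
  rw [hfin, E1, E2, smul_zero, map_zero, zero_smul, zero_add, inner_zero_left]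

end
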